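/- arXiv:1207.7154 — 2 statements merged into one kernel-verified Lean document; each statement's English description precedes it below -/
import Mathlib

section
/- The limit lim_{n→∞} (1/n)·log|X_{2,3;n}| exists and equals Σ_{k=1}^∞ (1/3)·(1/q_k − 1/q_{k+1})·log|Σ_k| (the series converges). -/
/-!
Each `N ≥ 1` factors uniquely as `N = i * m` with `i` coprime to `6` and `m ∈ M_{2,3}`, and the
constraint on `x_k, x_{2k}, x_{3k}` only relates indices with the same `i`. Hence `X_{2,3;n}` is a
product, over the `i ≤ n` coprime to `6`, of the sets of admissible configurations on
`M_{2,3} ∩ [1, n / i]` (`card_X23`).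

Let `Λ(t)` be the logarithm of the number of admissible configurations on `M_{2,3} ∩ [1, t]`
(`logConf`), so that `log |Σ_k| = Λ(q_k)`. It jumps only at the points `q_k`, by amounts `g_k` with
`0 ≤ g_k ≤ log 2` (`jump_nonneg`, `jump_le`). Exchanging the order of summation gives
`log |X_{2,3;n}| = ∑_k g_k * c(n / q_k)` with `c(m)` the number of `i ≤ m` coprime to `6`
(`log_card_X23`). Since `c(m) = m / 3 + O(1)`, `c(m) ≤ m` and `∑ 1 / q_k` converges, dominated
convergence yields the limit `∑_k g_k / (3 q_k)`. Summation by parts turns this series into the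
stated one; the boundary term `log |Σ_K| / q_{K+1}` vanishes in the limit, again by dominated
convergence (`tendsto_boundary`).
-/

open Filter Topology

/-- Membership in `M_{2,3} = {2^a·3^b}`. -/
def M23 (m : ℕ) : Prop := ∃ a b : ℕ, m = 2 ^ a * 3 ^ b

/-- `q23 k` is the `(k+1)`-st element of `M_{2,3}` in increasing order
(so `q23 0 = q_1 = 1`, `q23 1 = q_2 = 2`, ...). -/
noncomputable def q23 (k : ℕ) : ℕ := Nat.nth M23 k

/-- `Σ_k` : functions `U : {m ∈ M_{2,3} : m ≤ q_k} → {0,1}` (encoded as functions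
`ℕ → ℕ` bounded by `1` and vanishing outside the domain) with
`U(m)·U(2m)·U(3m) = 0` for every `m ∈ M_{2,3}` with `3m ≤ q_k`. -/
def Sig23 (k : ℕ) : Set (ℕ → ℕ) :=
  {U | (∀ m, U m ≤ 1) ∧
       (∀ m, M23 m → 3 * m ≤ q23 k → U m * U (2 * m) * U (3 * m) = 0) ∧
       (∀ m, ¬(M23 m ∧ m ≤ q23 k) → U m = 0)}

/-- `X_{2,3;n}` : functions `x : {1,…,n} → {0,1}` with `x_k·x_{2k}·x_{3k} = 0`
for every `k ≥ 1` with `3k ≤ n`. -/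
def X23 (n : ℕ) : Set (ℕ → ℕ) :=
  {x | (∀ m, x m ≤ 1) ∧
       (∀ k, 1 ≤ k → 3 * k ≤ n → x k * x (2 * k) * x (3 * k) = 0) ∧
       (∀ m, m = 0 ∨ n < m → x m = 0)}

noncomputable instance instDecidablePredM23 : DecidablePred M23 :=
  fun _ => Classical.propDecidable _

/-! ### The set `M_{2,3}` and its enumeration -/

theorem M23.pos {m : ℕ} (h : M23 m) : 0 < m := by
  obtain ⟨a, b, rfl⟩ := h
  positivity

theorem M23.two_mul {m : ℕ} (h : M23 m) : M23 (2 * m) := by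
  obtain ⟨a, b, rfl⟩ := h
  exact ⟨a + 1, b, by ring⟩

theorem M23.three_mul {m : ℕ} (h : M23 m) : M23 (3 * m) := by
  obtain ⟨a, b, rfl⟩ := h
  exact ⟨a, b + 1, by ring⟩

theorem M23.coprime {m i : ℕ} (h : M23 m) (hi : Nat.Coprime 6 i) : Nat.Coprime m i := by
  obtain ⟨a, b, rfl⟩ := h
  have h2 : Nat.Coprime 2 i := hi.coprime_dvd_left (by norm_num)
  have h3 : Nat.Coprime 3 i := hi.coprime_dvd_left (by norm_num)
  exact (h2.pow_left a).mul_left (h3.pow_left b)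

theorem infinite_M23 : (Set.ofPred M23).Infinite := by
  refine Set.infinite_of_injective_forall_mem (f := fun a : ℕ => 2 ^ a)
    (Nat.pow_right_injective le_rfl) ?_
  intro a
  exact ⟨a, 0, by simp⟩

theorem q23_mem (k : ℕ) : M23 (q23 k) := Nat.nth_mem_of_infinite infinite_M23 k

theorem q23_pos (k : ℕ) : 0 < q23 k := (q23_mem k).pos

theorem q23_strictMono : StrictMono q23 := Nat.nth_strictMono infinite_M23

theorem lt_count_iff {k t : ℕ} : k < Nat.count M23 (t + 1) ↔ q23 k ≤ t := by
  rw [Nat.lt_nth_iff_count_lt infinite_M23, Nat.lt_succ_iff]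
  rfl

/-- The series of reciprocals of `M_{2,3}` is a subseries of a product of two geometric series. -/
theorem summable_inv_q23 : Summable (fun k : ℕ => 1 / (q23 k : ℝ)) := by
  choose a b hab using q23_mem
  have hinj : Function.Injective (fun k => (a k, b k)) := by
    intro k l hkl
    simp only [Prod.mk.injEq] at hkl
    apply q23_strictMono.injective
    rw [hab k, hab l, hkl.1, hkl.2]
  have h2 : Summable (fun n : ℕ => (1 / 2 : ℝ) ^ n) := summable_geometric_two
  have h3 : Summable (fun n : ℕ => (1 / 3 : ℝ) ^ n) :=
    summable_geometric_of_lt_one (by norm_num) (by norm_num)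
  have hs := (h2.mul_of_nonneg h3 (fun n => by positivity) (fun n => by positivity)).comp_injective
    hinj
  refine hs.congr fun k => ?_
  simp only [Function.comp]
  rw [hab k]
  push_cast
  rw [div_pow, div_pow, one_pow, one_pow, div_mul_div_comm, one_mul]

/-- Existence of the factorization into a part coprime to `6` and a part in `M_{2,3}`. -/
theorem exists_factor {N : ℕ} (hN : N ≠ 0) : ∃ i m, Nat.Coprime 6 i ∧ M23 m ∧ N = i * m := by
  obtain ⟨a, N', h2, rfl⟩ := Nat.exists_eq_pow_mul_and_not_dvd hN 2 (by norm_num)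
  have hN' : N' ≠ 0 := by
    rintro rfl
    simp at h2
  obtain ⟨b, i, h3, rfl⟩ := Nat.exists_eq_pow_mul_and_not_dvd hN' 3 (by norm_num)
  refine ⟨i, 2 ^ a * 3 ^ b, ?_, ⟨a, b, rfl⟩, by ring⟩
  have h2' : Nat.Coprime 2 i :=
    (Nat.Prime.coprime_iff_not_dvd Nat.prime_two).2 fun h => h2 (h.mul_left _)
  have h3' : Nat.Coprime 3 i := (Nat.Prime.coprime_iff_not_dvd Nat.prime_three).2 h3
  exact h2'.mul_left h3'

theorem factor_unique {i m i' m' : ℕ} (hi : Nat.Coprime 6 i) (hm : M23 m)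
    (hi' : Nat.Coprime 6 i') (hm' : M23 m') (h : i * m = i' * m') : i = i' ∧ m = m' := by
  have h1 : m ∣ m' := (hm.coprime hi').dvd_of_dvd_mul_left (h ▸ Dvd.intro_left i rfl)
  have h2 : m' ∣ m := (hm'.coprime hi).dvd_of_dvd_mul_left (h ▸ Dvd.intro_left i' rfl)
  have hmm : m = m' := Nat.dvd_antisymm h1 h2
  subst hmm
  exact ⟨Nat.eq_of_mul_eq_mul_right hm.pos h, rfl⟩

/-! ### Configurations on `M_{2,3} ∩ [1, t]` -/

/-- The admissible `0`-`1` configurations on `M_{2,3} ∩ [1, t]`, extended by zero to `ℕ`. For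
`t = q_k` this is `Σ_k`. -/
def conf (t : ℕ) : Set (ℕ → ℕ) :=
  {U | (∀ m, U m ≤ 1) ∧
       (∀ m, M23 m → 3 * m ≤ t → U m * U (2 * m) * U (3 * m) = 0) ∧
       (∀ m, ¬(M23 m ∧ m ≤ t) → U m = 0)}

theorem zero_mem_conf (t : ℕ) : (fun _ => 0) ∈ conf t := by
  refine ⟨fun _ => by simp, fun _ _ _ => by simp, fun _ _ => rfl⟩

instance instNonemptyConf (t : ℕ) : Nonempty (conf t) := ⟨⟨_, zero_mem_conf t⟩⟩

theorem conf_zero : conf 0 = {fun _ => 0} := by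
  ext U
  constructor
  · intro h
    funext m
    exact h.2.2 m fun hm => by have := hm.1.pos; omega
  · rintro rfl
    exact zero_mem_conf 0

theorem conf_subset_succ (t : ℕ) : conf t ⊆ conf (t + 1) := by
  rintro U ⟨h1, h2, h3⟩
  refine ⟨h1, fun m hm hle => ?_, fun m hm => h3 m fun h => hm ⟨h.1, by omega⟩⟩
  by_cases h : 3 * m ≤ t
  · exact h2 m hm h
  · rw [h3 (3 * m) (fun h' => h h'.2), mul_zero]

theorem conf_succ_of_not {t : ℕ} (ht : ¬ M23 (t + 1)) : conf (t + 1) = conf t := by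
  refine Set.Subset.antisymm ?_ (conf_subset_succ t)
  rintro U ⟨h1, h2, h3⟩
  refine ⟨h1, fun m hm hle => h2 m hm (by omega), fun m hm => h3 m ?_⟩
  rintro ⟨hm1, hm2⟩
  rcases Nat.lt_or_ge t m with h | h
  · exact ht ((show m = t + 1 by omega) ▸ hm1)
  · exact hm ⟨hm1, h⟩

/-- Splits a configuration on `[1, t + 1]` into its restriction to `[1, t]` and its last value. -/
def confSplit (t : ℕ) (U : conf (t + 1)) : conf t × Fin 2 :=
  (⟨fun m => if m ≤ t then U.1 m else 0, by
    obtain ⟨U, h1, h2, h3⟩ := U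
    refine ⟨fun m => ?_, fun m hm hle => ?_, fun m hm => ?_⟩
    · dsimp only
      split_ifs
      · exact h1 m
      · simp
    · dsimp only
      rw [if_pos (by omega), if_pos (by omega), if_pos hle]
      exact h2 m hm (by omega)
    · dsimp only
      split_ifs with h
      · exact h3 m fun h' => hm ⟨h'.1, h⟩
      · rfl⟩,
   ⟨U.1 (t + 1), Nat.lt_succ_of_le (U.2.1 _)⟩)

theorem confSplit_injective (t : ℕ) : Function.Injective (confSplit t) := by
  rintro U V h
  simp only [confSplit, Prod.mk.injEq, Subtype.mk.injEq, Fin.mk.injEq] at h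
  apply Subtype.ext
  funext m
  rcases lt_trichotomy m (t + 1) with hm | rfl | hm
  · simpa [Nat.lt_succ_iff.1 hm] using congrFun h.1 m
  · exact h.2
  · rw [U.2.2.2 m (fun h => by omega), V.2.2.2 m (fun h => by omega)]

instance instFiniteConf (t : ℕ) : Finite (conf t) := by
  induction t with
  | zero =>
    rw [conf_zero]
    infer_instance
  | succ t ih => exact Finite.of_injective _ (confSplit_injective t)

theorem card_conf_pos (t : ℕ) : 0 < Nat.card (conf t) := Nat.card_pos

theorem card_conf_succ_le (t : ℕ) : Nat.card (conf (t + 1)) ≤ 2 * Nat.card (conf t) := by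
  have := Nat.card_le_card_of_injective _ (confSplit_injective t)
  rw [Nat.card_prod, Nat.card_fin] at this
  omega

theorem card_conf_le_succ (t : ℕ) : Nat.card (conf t) ≤ Nat.card (conf (t + 1)) :=
  Nat.card_mono (Set.toFinite _) (conf_subset_succ t)

/-- The logarithm of the number of admissible configurations on `M_{2,3} ∩ [1, t]`. -/
noncomputable def logConf (t : ℕ) : ℝ := Real.log (Nat.card (conf t))

/-- The increment of `logConf` at the point `q_k` (its other increments are zero). -/
noncomputable def jump (k : ℕ) : ℝ := logConf (q23 k) - logConf (q23 k - 1)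

theorem jump_nonneg (k : ℕ) : 0 ≤ jump k := by
  obtain ⟨t, ht⟩ := Nat.exists_eq_add_one.2 (q23_pos k)
  rw [jump, ht, Nat.add_sub_cancel, sub_nonneg]
  exact Real.log_le_log (by exact_mod_cast card_conf_pos t) (by exact_mod_cast card_conf_le_succ t)

theorem jump_le (k : ℕ) : jump k ≤ Real.log 2 := by
  obtain ⟨t, ht⟩ := Nat.exists_eq_add_one.2 (q23_pos k)
  rw [jump, ht, Nat.add_sub_cancel, sub_le_iff_le_add]
  have hpos : (0 : ℝ) < Nat.card (conf t) := by exact_mod_cast card_conf_pos t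
  rw [logConf, logConf, ← Real.log_mul (by norm_num) hpos.ne']
  exact Real.log_le_log (by exact_mod_cast card_conf_pos (t + 1))
    (by exact_mod_cast card_conf_succ_le t)

theorem logConf_eq_sum (t : ℕ) :
    logConf t = ∑ k ∈ Finset.range (Nat.count M23 (t + 1)), jump k := by
  induction t with
  | zero =>
    have h0 : ¬ M23 0 := fun h => h.pos.ne rfl
    rw [logConf, conf_zero]
    simp [Nat.count_succ, h0]
  | succ t ih =>
    rw [Nat.count_succ]
    split_ifs with h
    · have hq : q23 (Nat.count M23 (t + 1)) = t + 1 := Nat.nth_count h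
      rw [Finset.sum_range_succ, ← ih, jump, hq, Nat.add_sub_cancel]
      ring
    · rw [add_zero, ← ih, logConf, conf_succ_of_not h, logConf]

theorem log_card_Sig23 (k : ℕ) :
    Real.log (Nat.card (Sig23 k)) = ∑ j ∈ Finset.range (k + 1), jump j := by
  have h : Nat.count M23 (q23 k + 1) = k + 1 := by
    rw [Nat.count_succ, if_pos (q23_mem k), q23, Nat.count_nth_of_infinite infinite_M23]
  rw [← h, ← logConf_eq_sum]
  rfl

/-! ### Decomposition of `X_{2,3;n}` -/

/-- The integers in `[1, n]` coprime to `6`. -/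
def cop (n : ℕ) : Finset ℕ := (Finset.Icc 1 n).filter (Nat.Coprime 6)

theorem mem_cop {n i : ℕ} : i ∈ cop n ↔ (1 ≤ i ∧ i ≤ n) ∧ Nat.Coprime 6 i := by
  simp [cop]

/-- Restricts `x` to the index sets `i * M_{2,3}`, for `i` coprime to `6`. -/
noncomputable def decompose (n : ℕ) (x : X23 n) (i : cop n) : conf (n / i.1) :=
  ⟨fun m => if M23 m then x.1 (i.1 * m) else 0, by
    obtain ⟨x, h1, h2, h3⟩ := x
    obtain ⟨i, hi⟩ := i
    rw [mem_cop] at hi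
    refine ⟨fun m => ?_, fun m hm hle => ?_, fun m hm => ?_⟩
    · dsimp only
      split_ifs
      · exact h1 _
      · simp
    · dsimp only at hle ⊢
      rw [if_pos hm, if_pos hm.two_mul, if_pos hm.three_mul]
      rw [Nat.le_div_iff_mul_le (by omega)] at hle
      have := h2 (i * m) (Nat.mul_pos hi.1.1 hm.pos) (by linarith)
      rwa [show i * (2 * m) = 2 * (i * m) by ring, show i * (3 * m) = 3 * (i * m) by ring]
    · dsimp only at hm ⊢
      split_ifs with h
      · refine h3 _ (Or.inr ?_)
        by_contra hlt
        refine hm ⟨h, ?_⟩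
        rw [Nat.le_div_iff_mul_le (by omega)]
        linarith
      · rfl⟩

theorem decompose_injective (n : ℕ) : Function.Injective (decompose n) := by
  intro x y hxy
  apply Subtype.ext
  funext N
  by_cases hN : N = 0 ∨ n < N
  · rw [x.2.2.2 N hN, y.2.2.2 N hN]
  · push Not at hN
    obtain ⟨i, m, hi, hm, rfl⟩ := exists_factor hN.1
    have hi0 : 1 ≤ i := Nat.pos_of_ne_zero (left_ne_zero_of_mul hN.1)
    have hin : i ≤ n := (Nat.le_mul_of_pos_right i hm.pos).trans hN.2
    have := congrFun (congrArg Subtype.val (congrFun hxy ⟨i, mem_cop.2 ⟨⟨hi0, hin⟩, hi⟩⟩)) m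
    simpa [decompose, hm] using this

theorem decompose_surjective (n : ℕ) : Function.Surjective (decompose n) := by
  intro f
  have hex : ∀ N : ℕ, ∃ p : ℕ × ℕ, N ≠ 0 → Nat.Coprime 6 p.1 ∧ M23 p.2 ∧ N = p.1 * p.2 := by
    intro N
    by_cases hN : N = 0
    · exact ⟨(0, 0), fun h => absurd hN h⟩
    · obtain ⟨i, m, h⟩ := exists_factor hN
      exact ⟨(i, m), fun _ => h⟩
  choose p hp using hex
  have hpeq : ∀ i m, 1 ≤ i → Nat.Coprime 6 i → M23 m → p (i * m) = (i, m) := by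
    intro i m hi0 hi hm
    obtain ⟨h1, h2, h3⟩ := hp (i * m) (Nat.mul_pos hi0 hm.pos).ne'
    obtain ⟨h4, h5⟩ := factor_unique hi hm h1 h2 h3
    exact Prod.ext h4.symm h5.symm
  -- `F` is `f` with its dependent argument replaced by a junk-extended natural number.
  let F : ℕ → ℕ → ℕ := fun i m => if h : i ∈ cop n then (f ⟨i, h⟩).1 m else 0
  have hF : ∀ i (h : i ∈ cop n) m, F i m = (f ⟨i, h⟩).1 m := fun i h m => dif_pos h
  have hF1 : ∀ i m, F i m ≤ 1 := by
    intro i m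
    by_cases h : i ∈ cop n
    · rw [hF i h]
      exact (f ⟨i, h⟩).2.1 m
    · simp [F, h]
  let x : ℕ → ℕ := fun N => if N = 0 ∨ n < N then 0 else F (p N).1 (p N).2
  have hx : ∀ i m, 1 ≤ i → Nat.Coprime 6 i → M23 m → i * m ≤ n → x (i * m) = F i m := by
    intro i m hi0 hi hm hle
    have : ¬ (i * m = 0 ∨ n < i * m) := by
      have := Nat.mul_pos hi0 hm.pos
      omega
    simp only [x]
    rw [if_neg this, hpeq i m hi0 hi hm]
  refine ⟨⟨x, fun m => ?_, fun k hk hkn => ?_, fun m hm => if_pos hm⟩, ?_⟩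
  · simp only [x]
    split_ifs
    · simp
    · exact hF1 _ _
  · obtain ⟨i, m, hi, hm, rfl⟩ := exists_factor (show k ≠ 0 by omega)
    have hi0 : 1 ≤ i := Nat.pos_of_ne_zero (left_ne_zero_of_mul (show i * m ≠ 0 by omega))
    have hin : i ≤ n := (Nat.le_mul_of_pos_right i hm.pos).trans (by omega)
    have hic : i ∈ cop n := mem_cop.2 ⟨⟨hi0, hin⟩, hi⟩
    have e2 : 2 * (i * m) = i * (2 * m) := by ring
    have e3 : 3 * (i * m) = i * (3 * m) := by ring
    rw [e2, e3, hx i m hi0 hi hm (by omega), hx i _ hi0 hi hm.two_mul (by omega),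
      hx i _ hi0 hi hm.three_mul (by omega), hF i hic, hF i hic, hF i hic]
    refine (f ⟨i, hic⟩).2.2.1 m hm ?_
    rw [Nat.le_div_iff_mul_le hi0]
    linarith
  · funext i
    obtain ⟨i, hic⟩ := i
    apply Subtype.ext
    funext m
    obtain ⟨⟨hi0, -⟩, hi⟩ := mem_cop.1 hic
    simp only [decompose]
    split_ifs with hm
    · by_cases hle : i * m ≤ n
      · rw [hx i m hi0 hi hm hle, hF i hic]
      · rw [show x (i * m) = 0 from if_pos (Or.inr (by omega))]
        refine ((f ⟨i, hic⟩).2.2.2 m ?_).symm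
        rintro ⟨-, h⟩
        rw [Nat.le_div_iff_mul_le hi0] at h
        exact hle (by linarith)
    · exact ((f ⟨i, hic⟩).2.2.2 m fun h => hm h.1).symm

theorem card_X23 (n : ℕ) : Nat.card (X23 n) = ∏ i ∈ cop n, Nat.card (conf (n / i)) := by
  rw [Nat.card_eq_of_bijective _ ⟨decompose_injective n, decompose_surjective n⟩, Nat.card_pi,
    Finset.prod_coe_sort (cop n) (fun i => Nat.card (conf (n / i)))]

/-- Both sides sum `jump k` over the pairs `(i, k)` with `i` coprime to `6` and `i * q_k ≤ n`. -/
theorem log_card_X23 (n : ℕ) :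
    Real.log (Nat.card (X23 n)) = ∑' k, jump k * ((cop (n / q23 k)).card : ℝ) := by
  have hout : ∀ k ∉ Finset.range (Nat.count M23 (n + 1)),
      jump k * ((cop (n / q23 k)).card : ℝ) = 0 := by
    intro k hk
    rw [Finset.mem_range, lt_count_iff, not_le] at hk
    simp [Nat.div_eq_of_lt hk, cop]
  rw [tsum_eq_sum hout, card_X23, Nat.cast_prod,
    Real.log_prod (fun i _ => by exact_mod_cast (card_conf_pos _).ne')]
  have h1 : ∀ i ∈ cop n, Real.log (Nat.card (conf (n / i))) =
      ∑ k ∈ Finset.range (Nat.count M23 (n + 1)), if i * q23 k ≤ n then jump k else 0 := by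
    intro i hi
    have hi0 : 0 < i := (mem_cop.1 hi).1.1
    rw [← Finset.sum_filter]
    refine (logConf_eq_sum (n / i)).trans (Finset.sum_congr ?_ fun _ _ => rfl)
    ext k
    rw [Finset.mem_filter, Finset.mem_range, Finset.mem_range, lt_count_iff, lt_count_iff,
      Nat.le_div_iff_mul_le hi0, mul_comm]
    exact ⟨fun h => ⟨(Nat.le_mul_of_pos_left _ hi0).trans h, h⟩, fun h => h.2⟩
  rw [Finset.sum_congr rfl h1, Finset.sum_comm]
  refine Finset.sum_congr rfl fun k _ => ?_
  have hq := q23_pos k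
  have h2 : (cop n).filter (fun i => i * q23 k ≤ n) = cop (n / q23 k) := by
    ext i
    rw [Finset.mem_filter, mem_cop, mem_cop, Nat.le_div_iff_mul_le hq]
    exact ⟨fun h => ⟨⟨h.1.1.1, h.2⟩, h.1.2⟩,
      fun h => ⟨⟨⟨h.1.1, (Nat.le_mul_of_pos_right _ hq).trans h.1.2⟩, h.2⟩, h.1.2⟩⟩
  rw [← Finset.sum_filter, h2, Finset.sum_const, nsmul_eq_mul, mul_comm]

/-! ### Counting integers coprime to `6` -/

theorem coprime_six_iff (i : ℕ) : Nat.Coprime 6 i ↔ i % 6 = 1 ∨ i % 6 = 5 := by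
  rw [Nat.Coprime, Nat.gcd_rec]
  have h : i % 6 < 6 := Nat.mod_lt _ (by norm_num)
  interval_cases i % 6 <;> simp

theorem card_cop (m : ℕ) : (cop m).card = (m + 5) / 6 + (m + 1) / 6 := by
  induction m with
  | zero => simp [cop]
  | succ m ih =>
    have h : cop (m + 1) = if Nat.Coprime 6 (m + 1) then insert (m + 1) (cop m) else cop m := by
      rw [cop, ← Finset.insert_Icc_right_eq_Icc_add_one (by omega), Finset.filter_insert]
      rfl
    rw [h]
    split_ifs with h6
    · rw [Finset.card_insert_of_notMem (by simp [mem_cop]), ih]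
      rw [coprime_six_iff] at h6
      omega
    · rw [ih]
      rw [coprime_six_iff] at h6
      omega

theorem card_cop_div_bounds (n : ℕ) {q : ℕ} (hq : 0 < q) :
    |((cop (n / q)).card : ℝ) - 1 / (3 * q) * n| ≤ 3 := by
  have hq' : (0 : ℝ) < q := by exact_mod_cast hq
  have e : (1 / (3 * q) * n : ℝ) = (n / q : ℝ) / 3 := by field_simp
  have h1 : ((n / q : ℕ) : ℝ) ≤ n / q := Nat.cast_div_le
  have h2 : (n / q : ℝ) < (n / q : ℕ) + 1 := by
    rw [div_lt_iff₀ hq']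
    have h := Nat.lt_mul_div_succ n hq
    rw [mul_comm] at h
    exact_mod_cast h
  have h3 : 3 * (cop (n / q)).card ≤ n / q + 6 := by
    rw [card_cop]
    omega
  have h4 : n / q ≤ 3 * (cop (n / q)).card + 6 := by
    rw [card_cop]
    omega
  have h3' : (3 * (cop (n / q)).card : ℝ) ≤ (n / q : ℕ) + 6 := by exact_mod_cast h3
  have h4' : ((n / q : ℕ) : ℝ) ≤ 3 * (cop (n / q)).card + 6 := by exact_mod_cast h4
  rw [e, abs_le]
  constructor <;> linarith

theorem tendsto_card_cop {q : ℕ} (hq : 0 < q) :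
    Tendsto (fun n : ℕ => ((cop (n / q)).card : ℝ) / n) atTop (𝓝 (1 / (3 * q))) := by
  rw [tendsto_iff_norm_sub_tendsto_zero]
  refine squeeze_zero' (Eventually.of_forall fun n => norm_nonneg _) ?_
    (tendsto_const_div_atTop_nhds_zero_nat (3 : ℝ))
  filter_upwards [eventually_gt_atTop 0] with n hn
  have hn' : (0 : ℝ) < n := by exact_mod_cast hn
  rw [Real.norm_eq_abs, div_sub' hn'.ne', abs_div, abs_of_pos hn', mul_comm (n : ℝ)]
  gcongr
  exact card_cop_div_bounds n hq

theorem card_cop_div_le (n q : ℕ) : ((cop (n / q)).card : ℝ) / n ≤ 1 / q := by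
  have h1 : (cop (n / q)).card ≤ n / q := by
    refine (Finset.card_filter_le _ _).trans ?_
    simp
  have h2 : ((cop (n / q)).card : ℝ) ≤ n / q :=
    le_trans (by exact_mod_cast h1) Nat.cast_div_le
  rcases Nat.eq_zero_or_pos n with rfl | hn
  · simp
  · have hn' : (0 : ℝ) < n := by exact_mod_cast hn
    rw [div_le_iff₀ hn']
    exact h2.trans_eq (by ring)

/-! ### Passage to the limit -/

theorem tendsto_entropy :
    Tendsto (fun n : ℕ => Real.log (Nat.card (X23 n)) / (n : ℝ)) atTop
      (𝓝 (∑' k, jump k * (1 / (3 * (q23 k : ℝ))))) := by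
  have h := tendsto_tsum_of_dominated_convergence (𝓕 := atTop)
    (f := fun (n k : ℕ) => jump k * (((cop (n / q23 k)).card : ℝ) / n))
    (g := fun k => jump k * (1 / (3 * (q23 k : ℝ))))
    (bound := fun k => Real.log 2 * (1 / (q23 k : ℝ)))
    (summable_inv_q23.mul_left _)
    (fun k => (tendsto_card_cop (q23_pos k)).const_mul _)
    (Eventually.of_forall fun n k => by
      have h0 : (0 : ℝ) ≤ ((cop (n / q23 k)).card : ℝ) / n := by positivity
      rw [Real.norm_of_nonneg (mul_nonneg (jump_nonneg k) h0)]
      exact mul_le_mul (jump_le k) (card_cop_div_le _ _) h0 (Real.log_nonneg (by norm_num)))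
  refine h.congr fun n => ?_
  rw [log_card_X23, ← tsum_div_const]
  exact tsum_congr fun k => (mul_div_assoc _ _ _).symm

/-- The boundary term of the summation by parts; it is dominated termwise by
`log 2 / q_j`, because `q_j ≤ q_K` for `j < K`. -/
theorem tendsto_boundary :
    Tendsto (fun K : ℕ => (∑ j ∈ Finset.range K, jump j) / (q23 K : ℝ)) atTop (𝓝 0) := by
  have hq : Tendsto (fun K : ℕ => 1 / (q23 K : ℝ)) atTop (𝓝 0) :=
    summable_inv_q23.tendsto_atTop_zero
  have h := tendsto_tsum_of_dominated_convergence (𝓕 := atTop)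
    (f := fun (K j : ℕ) => if j < K then jump j * (1 / (q23 K : ℝ)) else 0)
    (g := fun _ => (0 : ℝ))
    (bound := fun k => Real.log 2 * (1 / (q23 k : ℝ)))
    (summable_inv_q23.mul_left _)
    (fun j => by
      refine Tendsto.congr' ?_ ((hq.const_mul (jump j)).trans_eq (by rw [mul_zero]))
      filter_upwards [eventually_gt_atTop j] with K hK
      rw [if_pos hK])
    (Eventually.of_forall fun K j => by
      have hl : 0 ≤ Real.log 2 := Real.log_nonneg (by norm_num)
      have hj : (0 : ℝ) < q23 j := by exact_mod_cast q23_pos j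
      split_ifs with hjK
      · rw [Real.norm_of_nonneg (mul_nonneg (jump_nonneg j) (by positivity))]
        refine mul_le_mul (jump_le j) ?_ (by positivity) hl
        exact one_div_le_one_div_of_le hj (by exact_mod_cast (q23_strictMono hjK).le)
      · rw [norm_zero]
        positivity)
  rw [tsum_zero] at h
  refine h.congr fun K => ?_
  rw [tsum_eq_sum (s := Finset.range K) (fun j hj => if_neg (by simpa using hj)),
    div_eq_mul_one_div (∑ j ∈ Finset.range K, jump j), Finset.sum_mul]
  exact Finset.sum_congr rfl fun j hj => if_pos (Finset.mem_range.1 hj)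

theorem sum_by_parts (K : ℕ) :
    ∑ k ∈ Finset.range K, (1 / 3 : ℝ) * (1 / (q23 k : ℝ) - 1 / (q23 (k + 1) : ℝ)) *
      Real.log (Nat.card (Sig23 k)) =
    ∑ k ∈ Finset.range K, jump k * (1 / (3 * (q23 k : ℝ))) -
      1 / 3 * ((∑ j ∈ Finset.range K, jump j) / (q23 K : ℝ)) := by
  induction K with
  | zero => simp
  | succ K ih =>
    rw [Finset.sum_range_succ, ih, log_card_Sig23, Finset.sum_range_succ _ K,
      Finset.sum_range_succ _ K]
    have h1 : (q23 K : ℝ) ≠ 0 := by exact_mod_cast (q23_pos K).ne'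
    have h2 : (q23 (K + 1) : ℝ) ≠ 0 := by exact_mod_cast (q23_pos (K + 1)).ne'
    field_simp
    ring

theorem hasSum_entropy :
    HasSum (fun k : ℕ => (1 / 3 : ℝ) * (1 / (q23 k : ℝ) - 1 / (q23 (k + 1) : ℝ)) *
      Real.log (Nat.card (Sig23 k))) (∑' k, jump k * (1 / (3 * (q23 k : ℝ)))) := by
  rw [hasSum_iff_tendsto_nat_of_nonneg]
  · have hs : Summable (fun k => jump k * (1 / (3 * (q23 k : ℝ)))) := by
      refine Summable.of_nonneg_of_le (fun k => mul_nonneg (jump_nonneg k) (by positivity))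
        (fun k => ?_) (summable_inv_q23.mul_left (Real.log 2))
      have hq : (0 : ℝ) < q23 k := by exact_mod_cast q23_pos k
      refine mul_le_mul (jump_le k) ?_ (by positivity) (Real.log_nonneg (by norm_num))
      exact one_div_le_one_div_of_le hq (by linarith)
    have h := hs.hasSum.tendsto_sum_nat.sub (tendsto_boundary.const_mul (1 / 3))
    rw [mul_zero, sub_zero] at h
    exact h.congr fun K => (sum_by_parts K).symm
  · intro k
    have hq : (0 : ℝ) < q23 k := by exact_mod_cast q23_pos k
    have hle : 1 / (q23 (k + 1) : ℝ) ≤ 1 / (q23 k : ℝ) :=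
      one_div_le_one_div_of_le hq (by exact_mod_cast (q23_strictMono (Nat.lt_succ_self k)).le)
    rw [log_card_Sig23]
    exact mul_nonneg (mul_nonneg (by norm_num) (sub_nonneg.2 hle))
      (Finset.sum_nonneg fun j _ => jump_nonneg j)

/-- `lim_{n→∞} (1/n)·log|X_{2,3;n}|` exists and equals
`∑_{k=1}^∞ (1/3)·(1/q_k − 1/q_{k+1})·log|Σ_k|`, the series being convergent. -/
theorem entropy_X23 :
    Summable (fun k : ℕ => (1 / 3 : ℝ) * (1 / (q23 k : ℝ) - 1 / (q23 (k + 1) : ℝ)) *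
      Real.log (Nat.card (Sig23 k))) ∧
    Tendsto (fun n : ℕ => Real.log (Nat.card (X23 n)) / (n : ℝ)) atTop
      (nhds (∑' k : ℕ, (1 / 3 : ℝ) * (1 / (q23 k : ℝ) - 1 / (q23 (k + 1) : ℝ)) *
        Real.log (Nat.card (Sig23 k)))) := by
  refine ⟨hasSum_entropy.summable, ?_⟩
  rw [hasSum_entropy.tsum_eq]
  exact tendsto_entropy
end

section
/- The limit lim_{n→∞} (1/n)·log|X_{Γ;n}(N,C)| exists and equals Σ_{k=1}^∞ β_Γ·(1/q_k − 1/q_{k+1})·log|Σ_k(N,C)| (the series converges). -/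
/-!
Since the `γ_j` are pairwise coprime, every positive integer is uniquely `i * m` with `i ∈ I_Γ` and
`m ∈ M_Γ` (`exists_decomp`, `decomp_unique`), and a constraint only links indices with the same
`i`. Hence `X_{Γ;n}` is the product over `i ∈ I_Γ ∩ [1, n]` of the sets of admissible labellings of
`M_Γ ∩ [1, n / i]` (`card_XGamNC`).

Let `δ_k ≥ 0` be the increment of `log |Σ|` when the cutoff reaches `q_k`, and `A(x)` the number of
elements of `I_Γ` up to `x`. Taking logarithms and exchanging sums gives
`log |X_{Γ;n}| = ∑_k δ_k A(n / q_k)` (`log_card_XGamNC`). Adding one site to the domain multiplies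
the number of labellings by a factor in `[1, N]`, the lower bound because `0 ∈ C` makes extension by
zero admissible; so `0 ≤ δ_k ≤ log N`. The set `I_Γ` is periodic modulo `∏ γ_j`, so
`A(n / q_k) / n → β_Γ / q_k`, while `A(n / q_k) / n ≤ 1 / q_k` and `∑ 1 / q_k < ∞`. Dominated
convergence for series shows that the limit is `∑_k β_Γ δ_k / q_k`.

Summation by parts turns this series into `∑_k β_Γ (1/q_k - 1/q_{k+1}) log |Σ_k|`; the boundary term
is at most a constant times `K / q_K`, which tends to zero because `1 / q_k` is decreasing and
summable (`tendsto_nat_mul_of_antitone`).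
-/

open Filter Topology

/-- Membership in `M_Γ = {γ_1^{m_1}⋯γ_d^{m_d}}` (here there are `d+2` exponents,
encoding the paper's assumption `d ≥ 2`). -/
def MGam (d : ℕ) (γ : Fin (d + 2) → ℕ) (m : ℕ) : Prop :=
  ∃ e : Fin (d + 2) → ℕ, m = ∏ j, γ j ^ e j

/-- `qGam d γ k` is the `(k+1)`-st element of `M_Γ` in increasing order
(so `qGam d γ 0 = q_1 = 1`). -/
noncomputable def qGam (d : ℕ) (γ : Fin (d + 2) → ℕ) (k : ℕ) : ℕ := Nat.nth (MGam d γ) k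

/-- `I_Γ` : positive integers divisible by no `γ_j`. -/
def IGam (d : ℕ) (γ : Fin (d + 2) → ℕ) (i : ℕ) : Prop := 0 < i ∧ ∀ j, ¬ γ j ∣ i

/-- `β_Γ = #(I_Γ ∩ [1, γ_1⋯γ_d]) / (γ_1⋯γ_d)`. -/
noncomputable def betaGam (d : ℕ) (γ : Fin (d + 2) → ℕ) : ℝ :=
  (Nat.card {i : ℕ | IGam d γ i ∧ i ≤ ∏ j, γ j} : ℝ) / ((∏ j, γ j : ℕ) : ℝ)

/-- `Σ_k(N,C)` : functions `U : {m ∈ M_Γ : m ≤ q_k} → {0,…,N−1}` (encoded as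
functions `ℕ → ℕ` with values `< N` and vanishing outside the domain) with
`U(m)·U(γ_1 m)·⋯·U(γ_d m) ∈ C` for every `m ∈ M_Γ` with `γ_d·m ≤ q_k`. -/
def SigGamNC (d : ℕ) (γ : Fin (d + 2) → ℕ) (N : ℕ) (C : Set ℕ) (k : ℕ) :
    Set (ℕ → ℕ) :=
  {U | (∀ m, U m < N) ∧
       (∀ m, MGam d γ m → γ (Fin.last (d + 1)) * m ≤ qGam d γ k →
          U m * ∏ j, U (γ j * m) ∈ C) ∧
       (∀ m, ¬(MGam d γ m ∧ m ≤ qGam d γ k) → U m = 0)}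

/-- `X_{Γ;n}(N,C)` : functions `x : {1,…,n} → {0,…,N−1}` with
`x_k·x_{γ_1 k}⋯x_{γ_d k} ∈ C` for every `k ≥ 1` with `γ_d·k ≤ n`. -/
def XGamNC (d : ℕ) (γ : Fin (d + 2) → ℕ) (N : ℕ) (C : Set ℕ) (n : ℕ) :
    Set (ℕ → ℕ) :=
  {x | (∀ m, x m < N) ∧
       (∀ k, 1 ≤ k → γ (Fin.last (d + 1)) * k ≤ n → x k * ∏ j, x (γ j * k) ∈ C) ∧
       (∀ m, m = 0 ∨ n < m → x m = 0)}

section Entropy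

open Classical in
/-- Number of elements of `I_Γ` in `[1, n]` (`0 ∉ I_Γ`, so starting the count at `0` is harmless). -/
noncomputable def countI (d : ℕ) (γ : Fin (d + 2) → ℕ) (n : ℕ) : ℕ := Nat.count (IGam d γ) (n + 1)

/-- The analogue of `Σ_k(N,C)` whose cutoff is an arbitrary integer `t` instead of `q_k`:
admissible labellings of `M_Γ ∩ [1, t]`, extended by zero. Thus `Σ_k` is the case `t = q_k`. -/
def SigT (d : ℕ) (γ : Fin (d + 2) → ℕ) (N : ℕ) (C : Set ℕ) (t : ℕ) : Set (ℕ → ℕ) :=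
  {U | (∀ m, U m < N) ∧
       (∀ m, MGam d γ m → γ (Fin.last (d + 1)) * m ≤ t → U m * ∏ j, U (γ j * m) ∈ C) ∧
       (∀ m, ¬(MGam d γ m ∧ m ≤ t) → U m = 0)}

variable {d : ℕ} {γ : Fin (d + 2) → ℕ} {N : ℕ} {C : Set ℕ}

/-! ### The factorization of integers as `i * m` with `i ∈ I_Γ`, `m ∈ M_Γ` -/

lemma MGam_pos (hγ : ∀ j, 2 ≤ γ j) {m : ℕ} (hm : MGam d γ m) : 0 < m := by
  obtain ⟨e, rfl⟩ := hm
  exact Finset.prod_pos fun j _ => pow_pos (by have := hγ j; omega) _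

lemma MGam_one : MGam d γ 1 := ⟨fun _ => 0, by simp⟩

lemma MGam_mul {m : ℕ} (hm : MGam d γ m) (j : Fin (d + 2)) : MGam d γ (γ j * m) := by
  obtain ⟨e, rfl⟩ := hm
  refine ⟨e + Pi.single j 1, ?_⟩
  simp only [Pi.add_apply, pow_add, Finset.prod_mul_distrib]
  rw [mul_comm, Finset.prod_eq_single (a := j) (f := fun x => γ x ^ (Pi.single j 1 : _ → ℕ) x)]
  · simp
  · intro b _ hb
    simp [Pi.single_eq_of_ne hb]
  · simp

lemma MGam_infinite (hγ : ∀ j, 2 ≤ γ j) : (Set.ofPred (MGam d γ)).Infinite := by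
  have hpow : ∀ n, MGam d γ (γ 0 ^ n) := by
    intro n
    induction n with
    | zero => simpa using MGam_one
    | succ n ih => rw [pow_succ']; exact MGam_mul ih 0
  exact Set.infinite_of_injective_forall_mem (Nat.pow_right_injective (hγ 0)) hpow

lemma exists_decomp (hγ : ∀ j, 2 ≤ γ j) (t : ℕ) (ht : 0 < t) :
    ∃ i m, IGam d γ i ∧ MGam d γ m ∧ t = i * m := by
  induction t using Nat.strong_induction_on with
  | _ t ih =>
    by_cases h : ∃ j, γ j ∣ t
    · obtain ⟨j, s, rfl⟩ := h
      have hs : 0 < s := Nat.pos_of_mul_pos_left ht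
      have := hγ j
      obtain ⟨i, m, hi, hm, rfl⟩ := ih s (by nlinarith) hs
      exact ⟨i, γ j * m, hi, MGam_mul hm j, by ring⟩
    · push Not at h
      exact ⟨t, 1, ⟨ht, h⟩, MGam_one, by simp⟩

/-- The exponent of `γ_j` in `i * ∏ γ_l ^ e_l` with `i ∈ I_Γ` is the largest `a` with
`γ_j ^ a` dividing the product; the `γ_j` need not be prime, coprimality suffices. -/
lemma exponent_le (hγ : ∀ j, 2 ≤ γ j) (hcop : ∀ i j, i ≠ j → Nat.Coprime (γ i) (γ j))
    {i i' : ℕ} {e e' : Fin (d + 2) → ℕ} (hi : IGam d γ i)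
    (h : i * ∏ j, γ j ^ e j = i' * ∏ j, γ j ^ e' j) (j : Fin (d + 2)) : e' j ≤ e j := by
  by_contra! hlt
  have hd : γ j ^ (e j + 1) ∣ i * ∏ j, γ j ^ e j := by
    rw [h]
    exact Dvd.dvd.mul_left ((pow_dvd_pow _ hlt).trans
      (Finset.dvd_prod_of_mem (fun j => γ j ^ e' j) (Finset.mem_univ j))) _
  rw [← Finset.mul_prod_erase _ _ (Finset.mem_univ j), pow_succ, mul_left_comm] at hd
  have hd' := Nat.dvd_of_mul_dvd_mul_left (pow_pos (by have := hγ j; omega) _) hd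
  have hc : Nat.Coprime (γ j) (∏ l ∈ Finset.univ.erase j, γ l ^ e l) :=
    Nat.Coprime.prod_right fun l hl =>
      Nat.Coprime.pow_right _ (hcop j l (Finset.ne_of_mem_erase hl).symm)
  exact hi.2 j (hc.dvd_of_dvd_mul_right hd')

lemma decomp_unique (hγ : ∀ j, 2 ≤ γ j) (hcop : ∀ i j, i ≠ j → Nat.Coprime (γ i) (γ j))
    {i i' m m' : ℕ} (hi : IGam d γ i) (hi' : IGam d γ i') (hm : MGam d γ m)
    (hm' : MGam d γ m') (h : i * m = i' * m') : i = i' ∧ m = m' := by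
  have hpos := MGam_pos hγ hm
  obtain ⟨e, rfl⟩ := hm
  obtain ⟨e', rfl⟩ := hm'
  have he : e = e' := funext fun j =>
    le_antisymm (exponent_le hγ hcop hi' h.symm j) (exponent_le hγ hcop hi h j)
  subst he
  exact ⟨Nat.eq_of_mul_eq_mul_right hpos h, rfl⟩

/-! ### Cardinalities of the sets of admissible labellings -/

lemma finite_SigT (t : ℕ) : (SigT d γ N C t).Finite := by
  have : Finite (SigT d γ N C t) := by
    refine Finite.of_injective (β := Fin (t + 1) → Fin N)
      (fun U a => ⟨U.1 a, U.2.1 a⟩) fun U V h => Subtype.ext (funext fun m => ?_)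
    by_cases hm : m ≤ t
    · have := congrFun h ⟨m, by omega⟩
      simpa using this
    · rw [U.2.2.2 m (by tauto), V.2.2.2 m (by tauto)]
  exact Set.toFinite _

lemma zero_mem_SigT (hN : 2 ≤ N) (hC : 0 ∈ C) (t : ℕ) : (fun _ => 0) ∈ SigT d γ N C t :=
  ⟨fun _ => by dsimp only; omega, fun _ _ _ => by simpa using hC, fun _ _ => rfl⟩

lemma card_SigT_pos (hN : 2 ≤ N) (hC : 0 ∈ C) (t : ℕ) : 0 < Nat.card (SigT d γ N C t) := by
  have := (finite_SigT (d := d) (γ := γ) (N := N) (C := C) t).to_subtype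
  have : Nonempty (SigT d γ N C t) := ⟨⟨_, zero_mem_SigT hN hC t⟩⟩
  exact Nat.card_pos

/-- A labelling vanishing beyond `s` satisfies every constraint with `γ_d m > s`, because the
factor at `γ_d m` is zero and `0 ∈ C`. -/
lemma SigT_mono (hC : 0 ∈ C) {s t : ℕ} (hst : s ≤ t) :
    SigT d γ N C s ⊆ SigT d γ N C t := by
  rintro U ⟨h1, h2, h3⟩
  refine ⟨h1, fun m hm _ => ?_, fun m hm => h3 m fun h => hm ⟨h.1, h.2.trans hst⟩⟩
  by_cases hs : γ (Fin.last (d + 1)) * m ≤ s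
  · exact h2 m hm hs
  · rw [Finset.prod_eq_zero (Finset.mem_univ (Fin.last (d + 1))) (h3 _ fun h => hs h.2)]
    simpa using hC

lemma SigT_eq (hC : 0 ∈ C) {s t : ℕ} (hst : s ≤ t)
    (h : ∀ m, MGam d γ m → m ≤ t → m ≤ s) : SigT d γ N C s = SigT d γ N C t := by
  refine (SigT_mono hC hst).antisymm ?_
  rintro U ⟨h1, h2, h3⟩
  exact ⟨h1, fun m hm hs => h2 m hm (hs.trans hst), fun m hm => h3 m fun h' => hm ⟨h'.1, h _ h'.1 h'.2⟩⟩

lemma SigT_zero (hγ : ∀ j, 2 ≤ γ j) (hN : 2 ≤ N) (hC : 0 ∈ C) :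
    SigT d γ N C 0 = {fun _ => 0} := by
  refine Set.Subset.antisymm ?_ (by simpa using zero_mem_SigT hN hC 0)
  rintro U ⟨-, -, h3⟩
  exact funext fun m => h3 m fun h => by have := MGam_pos hγ h.1; omega

/-- Forgetting the label at `t + 1` maps `Σ` with cutoff `t + 1` into `Σ` with cutoff `t`,
with fibres of size at most `N`. -/
lemma card_SigT_succ_le (hle : ∀ j, γ j ≤ γ (Fin.last (d + 1))) (hγ : ∀ j, 2 ≤ γ j)
    (hN : 2 ≤ N) (t : ℕ) :
    Nat.card (SigT d γ N C (t + 1)) ≤ N * Nat.card (SigT d γ N C t) := by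
  have := (finite_SigT (d := d) (γ := γ) (N := N) (C := C) t).to_subtype
  have hmem : ∀ U ∈ SigT d γ N C (t + 1),
      (fun m => if m ≤ t then U m else 0) ∈ SigT d γ N C t := by
    rintro U ⟨h1, h2, h3⟩
    refine ⟨fun m => ?_, fun m hm ht => ?_, fun m hm => ?_⟩
    · dsimp only
      split_ifs
      · exact h1 m
      · omega
    · have hj : ∀ j, γ j * m ≤ t := fun j => (Nat.mul_le_mul_right m (hle j)).trans ht
      have hmt : m ≤ t := (Nat.le_mul_of_pos_left m (by have := hγ 0; omega)).trans (hj 0)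
      simp only [hj, hmt, if_true]
      exact h2 m hm (ht.trans (Nat.le_succ t))
    · dsimp only
      split_ifs with h
      · exact h3 m fun h' => hm ⟨h'.1, h⟩
      · rfl
  calc Nat.card (SigT d γ N C (t + 1))
      ≤ Nat.card (Fin N × SigT d γ N C t) := by
        refine Nat.card_le_card_of_injective
          (fun U => (⟨U.1 (t + 1), U.2.1 _⟩, ⟨_, hmem U.1 U.2⟩)) fun U V h => ?_
        simp only [Prod.mk.injEq, Fin.mk.injEq, Subtype.mk.injEq] at h
        refine Subtype.ext (funext fun m => ?_)
        rcases lt_trichotomy m (t + 1) with hm | hm | hm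
        · have := congrFun h.2 m
          simpa [Nat.lt_succ_iff.1 hm] using this
        · rw [hm]; exact h.1
        · rw [U.2.2.2 m (by omega), V.2.2.2 m (by omega)]
    _ = N * Nat.card (SigT d γ N C t) := by rw [Nat.card_prod, Nat.card_fin]

open Classical in
/-- Writing each index as `i * m` splits the constraints of `X_{Γ;n}` into independent
systems, one for each `i ∈ I_Γ ∩ [1, n]`, each being a copy of `Σ` with cutoff `⌊n / i⌋`. -/
lemma card_XGamNC (hle : ∀ j, γ j ≤ γ (Fin.last (d + 1))) (hγ : ∀ j, 2 ≤ γ j)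
    (hcop : ∀ i j, i ≠ j → Nat.Coprime (γ i) (γ j)) (hN : 2 ≤ N) (n : ℕ) :
    Nat.card (XGamNC d γ N C n) =
      ∏ i ∈ (Finset.Icc 1 n).filter (IGam d γ), Nat.card (SigT d γ N C (n / i)) := by
  set S := (Finset.Icc 1 n).filter (IGam d γ) with hS
  have hmemS : ∀ i, i ∈ S ↔ (1 ≤ i ∧ i ≤ n) ∧ IGam d γ i := by simp [hS]
  have hF : ∀ x ∈ XGamNC d γ N C n, ∀ i ∈ S,
      (fun m => if MGam d γ m ∧ m ≤ n / i then x (i * m) else 0) ∈ SigT d γ N C (n / i) := by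
    rintro x ⟨h1, h2, h3⟩ i hi
    have hi' := (hmemS i).1 hi
    refine ⟨fun m => ?_, fun m hm ht => ?_, fun m hm => if_neg hm⟩
    · dsimp only
      split_ifs
      · exact h1 _
      · omega
    · have hj : ∀ j, γ j * m ≤ n / i := fun j => (Nat.mul_le_mul_right m (hle j)).trans ht
      have hmt : m ≤ n / i := (Nat.le_mul_of_pos_left m (by have := hγ 0; omega)).trans (hj 0)
      simp only [hm, MGam_mul hm, hj, hmt, and_self, if_true]
      have := h2 (i * m) (Nat.mul_pos hi'.1.1 (MGam_pos hγ hm)) (by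
        rw [Nat.le_div_iff_mul_le hi'.1.1] at ht
        linarith)
      simpa only [mul_left_comm] using this
  let F : XGamNC d γ N C n → ∀ i : S, SigT d γ N C (n / i.1) :=
    fun x i => ⟨_, hF x.1 x.2 i.1 i.2⟩
  have hbij : Function.Bijective F := by
    constructor
    · intro x y hxy
      refine Subtype.ext (funext fun t => ?_)
      by_cases ht : t = 0 ∨ n < t
      · rw [x.2.2.2 t ht, y.2.2.2 t ht]
      · obtain ⟨i, m, hi, hm, rfl⟩ := exists_decomp hγ t (by omega)
        have hm0 := MGam_pos hγ hm
        have hin : i ≤ n := (Nat.le_mul_of_pos_right i hm0).trans (by omega)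
        have hiS : i ∈ S := (hmemS i).2 ⟨⟨hi.1, hin⟩, hi⟩
        have hmn : m ≤ n / i := by
          rw [Nat.le_div_iff_mul_le hi.1, mul_comm]; omega
        have := congrFun (congrArg Subtype.val (congrFun hxy ⟨i, hiS⟩)) m
        simpa [F, hm, hmn] using this
    · intro U
      have hdec : ∀ t, ∃ p : ℕ × ℕ, 0 < t → IGam d γ p.1 ∧ MGam d γ p.2 ∧ t = p.1 * p.2 := by
        intro t
        by_cases ht : 0 < t
        · obtain ⟨i, m, h⟩ := exists_decomp hγ t ht
          exact ⟨(i, m), fun _ => h⟩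
        · exact ⟨(0, 0), fun h => absurd h ht⟩
      choose p hp using hdec
      have hpu : ∀ i m, IGam d γ i → MGam d γ m → p (i * m) = (i, m) := by
        intro i m hi hm
        obtain ⟨a, b, c⟩ := hp (i * m) (Nat.mul_pos hi.1 (MGam_pos hγ hm))
        obtain ⟨e, f⟩ := decomp_unique hγ hcop hi a hm b c
        exact Prod.ext e.symm f.symm
      let V : ℕ → ℕ → ℕ := fun i m => if h : i ∈ S then (U ⟨i, h⟩).1 m else 0
      have hV : ∀ i (h : i ∈ S), V i = (U ⟨i, h⟩).1 := fun i h => by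
        funext m; simp [V, h]
      let x : ℕ → ℕ := fun t => if t = 0 ∨ n < t then 0 else V (p t).1 (p t).2
      have hx : ∀ i m, IGam d γ i → MGam d γ m → i * m ≤ n → x (i * m) = V i m := by
        intro i m hi hm hn
        have := Nat.mul_pos hi.1 (MGam_pos hγ hm)
        simp only [x]
        rw [if_neg (by omega), hpu i m hi hm]
      have hxX : x ∈ XGamNC d γ N C n := by
        refine ⟨fun t => ?_, fun k hk hkn => ?_, fun m hm => if_pos hm⟩
        · simp only [x, V]
          split_ifs
          · omega
          · exact (U _).2.1 _
          · omega
        · obtain ⟨i, m, hi, hm, rfl⟩ := exists_decomp hγ k hk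
          have hj : ∀ j, i * (γ j * m) ≤ n := fun j => by
            have := Nat.mul_le_mul_right (i * m) (hle j)
            linarith [mul_left_comm i (γ j) m]
          have him : i * m ≤ n :=
            (Nat.mul_le_mul_left i (Nat.le_mul_of_pos_left m (by have := hγ 0; omega))).trans (hj 0)
          have hin : i ≤ n := (Nat.le_mul_of_pos_right i (MGam_pos hγ hm)).trans him
          have hiS : i ∈ S := (hmemS i).2 ⟨⟨hi.1, hin⟩, hi⟩
          simp only [mul_left_comm _ i m]
          rw [hx i m hi hm him, Finset.prod_congr rfl fun j _ => hx i _ hi (MGam_mul hm j) (hj j),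
            hV i hiS]
          refine (U ⟨i, hiS⟩).2.2.1 m hm ?_
          rw [Nat.le_div_iff_mul_le hi.1, mul_comm]
          exact hj _
      refine ⟨⟨x, hxX⟩, funext fun i => Subtype.ext (funext fun m => ?_)⟩
      obtain ⟨i, hiS⟩ := i
      have hi := (hmemS i).1 hiS
      by_cases hm : MGam d γ m ∧ m ≤ n / i
      · have hn : i * m ≤ n := by
          rw [mul_comm, ← Nat.le_div_iff_mul_le hi.1.1]; exact hm.2
        simp only [F, if_pos hm]
        rw [hx i m hi.2 hm.1 hn, hV i hiS]
      · simp only [F, if_neg hm]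
        exact ((U ⟨i, hiS⟩).2.2.2 m hm).symm
  rw [Nat.card_eq_of_bijective F hbij, Nat.card_pi,
    Finset.prod_coe_sort S fun i => Nat.card (SigT d γ N C (n / i))]

/-! ### Density of `I_Γ` -/

lemma IGam_iff (i : ℕ) : IGam d γ i ↔ ∀ j, ¬ γ j ∣ i := by
  refine ⟨fun h => h.2, fun h => ⟨Nat.pos_of_ne_zero ?_, h⟩⟩
  rintro rfl
  exact h 0 (dvd_zero _)

lemma IGam_periodic : Function.Periodic (IGam d γ) (∏ j, γ j) := by
  intro i
  simp only [IGam_iff, eq_iff_iff]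
  exact forall_congr' fun j => not_congr
    (Nat.dvd_add_left (Finset.dvd_prod_of_mem γ (Finset.mem_univ j)))

lemma countI_le (n : ℕ) : countI d γ n ≤ n := by
  classical
  have h0 : ¬ IGam d γ 0 := fun h => absurd h.1 (lt_irrefl 0)
  have := Nat.count_succ' (IGam d γ) n
  have h2 := Nat.count_le (p := fun k => IGam d γ (k + 1)) (n := n)
  simp only [countI]
  convert h2 using 1
  rw [this, if_neg h0, add_zero]

open Classical in
lemma countI_eq_card (n : ℕ) : countI d γ n = ((Finset.Icc 1 n).filter (IGam d γ)).card := by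
  rw [countI, Nat.count_eq_card_filter_range]
  congr 1
  ext i
  simp only [Finset.mem_filter, Finset.mem_range, Finset.mem_Icc]
  exact ⟨fun h => ⟨⟨h.2.1, by omega⟩, h.2⟩, fun h => ⟨by omega, h.2⟩⟩

open Classical in
lemma betaGam_eq : betaGam d γ = (Nat.count (IGam d γ) (∏ j, γ j) : ℝ) / ((∏ j, γ j : ℕ) : ℝ) := by
  have hP : ¬ IGam d γ (∏ j, γ j) := fun h =>
    h.2 0 (Finset.dvd_prod_of_mem γ (Finset.mem_univ 0))
  rw [betaGam]
  congr 2
  have : {i : ℕ | IGam d γ i ∧ i ≤ ∏ j, γ j} =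
      ((Finset.range (∏ j, γ j)).filter (IGam d γ) : Finset ℕ) := by
    ext i
    simp only [Set.mem_ofPred_eq, Finset.coe_filter, Finset.mem_range]
    refine ⟨fun h => ⟨lt_of_le_of_ne h.2 ?_, h.1⟩, fun h => ⟨h.2, h.1.le⟩⟩
    rintro rfl
    exact hP h.1
  rw [this, Nat.count_eq_card_filter_range, Nat.card_coe_set_eq, Set.ncard_coe_finset]

lemma betaGam_nonneg : 0 ≤ betaGam d γ := by
  unfold betaGam; positivity

/-- Periodicity of `I_Γ` modulo `P = ∏ γ_j` bounds the discrepancy of its counting function. -/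
lemma abs_countI_sub_le (hγ : ∀ j, 2 ≤ γ j) :
    ∃ B : ℝ, ∀ n : ℕ, |(countI d γ n : ℝ) - betaGam d γ * n| ≤ B := by
  classical
  set P := ∏ j, γ j with hP
  have hP0 : 0 < P := Finset.prod_pos fun j _ => by have := hγ j; omega
  have hP' : (0 : ℝ) < P := by exact_mod_cast hP0
  have hb : (Nat.count (IGam d γ) P : ℝ) = betaGam d γ * P := by
    rw [betaGam_eq, ← hP, div_mul_cancel₀ _ hP'.ne']
  have hper : ∀ a r, Nat.count (IGam d γ) (a * P + r) =
      a * Nat.count (IGam d γ) P + Nat.count (IGam d γ) r := by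
    intro a r
    induction a with
    | zero => simp
    | succ a ih =>
      have hshift : (fun k => IGam d γ (P + k)) = IGam d γ := by
        funext k
        rw [add_comm]
        exact IGam_periodic k
      rw [show (a + 1) * P + r = P + (a * P + r) by ring, Nat.count_add]
      simp only [hshift]
      rw [ih]; ring
  refine ⟨P + betaGam d γ * P + betaGam d γ, fun n => ?_⟩
  have hβ := betaGam_nonneg (d := d) (γ := γ)
  obtain ⟨a, r, hr, hn⟩ : ∃ a r, r < P ∧ n + 1 = a * P + r :=
    ⟨(n + 1) / P, (n + 1) % P, Nat.mod_lt _ hP0, by rw [mul_comm]; exact (Nat.div_add_mod _ _).symm⟩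
  have hn' : (n : ℝ) = a * P + r - 1 := by
    have : ((n + 1 : ℕ) : ℝ) = ((a * P + r : ℕ) : ℝ) := by rw [hn]
    push_cast at this
    linarith
  have hc : (countI d γ n : ℝ) = a * (betaGam d γ * P) + Nat.count (IGam d γ) r := by
    rw [countI, hn, hper, ← hb]; push_cast; rfl
  have h1 : (Nat.count (IGam d γ) r : ℝ) ≤ P := by
    exact_mod_cast (Nat.count_le (p := IGam d γ)).trans hr.le
  have h2 : (0 : ℝ) ≤ Nat.count (IGam d γ) r := Nat.cast_nonneg _
  have h3 : betaGam d γ * r ≤ betaGam d γ * P :=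
    mul_le_mul_of_nonneg_left (by exact_mod_cast hr.le) hβ
  have h4 : 0 ≤ betaGam d γ * r := by positivity
  rw [hc, hn', abs_le]
  constructor <;> nlinarith

lemma tendsto_countI (hγ : ∀ j, 2 ≤ γ j) {q : ℕ} (hq : 0 < q) :
    Tendsto (fun n : ℕ => (countI d γ (n / q) : ℝ) / n) atTop (𝓝 (betaGam d γ * (1 / q))) := by
  obtain ⟨B, hB⟩ := abs_countI_sub_le (d := d) hγ
  have hβ := betaGam_nonneg (d := d) (γ := γ)
  have hq' : (0 : ℝ) < q := by exact_mod_cast hq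
  have hlim : Tendsto (fun n : ℕ => (B + betaGam d γ) / (n : ℝ)) atTop (𝓝 0) :=
    tendsto_const_div_atTop_nhds_zero_nat _
  rw [tendsto_iff_norm_sub_tendsto_zero]
  refine squeeze_zero' (Eventually.of_forall fun _ => norm_nonneg _) ?_ hlim
  filter_upwards [eventually_gt_atTop 0] with n hn
  have hn' : (0 : ℝ) < n := by exact_mod_cast hn
  have h1 : ((n / q : ℕ) : ℝ) ≤ n / q := Nat.cast_div_le
  have h2 : (n : ℝ) / q ≤ (n / q : ℕ) + 1 := by
    rw [div_le_iff₀ hq']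
    have := Nat.lt_div_mul_add (a := n) hq
    have : n ≤ (n / q + 1) * q := by linarith
    exact_mod_cast this
  have h3 := abs_le.1 (hB (n / q))
  have h4 := mul_le_mul_of_nonneg_left h1 hβ
  have h5 := mul_le_mul_of_nonneg_left h2 hβ
  have : (countI d γ (n / q) : ℝ) / n - betaGam d γ * (1 / q) =
      (countI d γ (n / q) - betaGam d γ * (n / q)) / n := by field_simp
  rw [this, Real.norm_eq_abs, abs_div, abs_of_pos hn']
  gcongr
  rw [abs_le]
  constructor <;> linarith

/-! ### The reciprocals of `M_Γ` -/

lemma MGam_qGam (hγ : ∀ j, 2 ≤ γ j) (k : ℕ) : MGam d γ (qGam d γ k) :=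
  Nat.nth_mem_of_infinite (MGam_infinite hγ) k

lemma qGam_strictMono (hγ : ∀ j, 2 ≤ γ j) : StrictMono (qGam d γ) :=
  Nat.nth_strictMono (MGam_infinite hγ)

lemma qGam_pos (hγ : ∀ j, 2 ≤ γ j) (k : ℕ) : 0 < qGam d γ k := MGam_pos hγ (MGam_qGam hγ k)

lemma lt_qGam (hγ : ∀ j, 2 ≤ γ j) (k : ℕ) : k < qGam d γ k := by
  induction k with
  | zero => exact qGam_pos hγ 0
  | succ k ih => exact lt_of_le_of_lt ih (qGam_strictMono hγ k.lt_succ_self)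

lemma qGam_zero (hγ : ∀ j, 2 ≤ γ j) : qGam d γ 0 = 1 := by
  classical
  have h : Nat.count (MGam d γ) 1 = 0 := by
    rw [Nat.count_one, if_neg fun h => absurd (MGam_pos hγ h) (lt_irrefl 0)]
  have := Nat.nth_count (p := MGam d γ) MGam_one
  rwa [h] at this

/-- `∑ 1 / q_k` is bounded by the finite Euler product `∏_j (1 - 1/γ_j)⁻¹ ≤ 2 ^ (d + 2)`. -/
lemma summable_inv_qGam (hγ : ∀ j, 2 ≤ γ j) : Summable fun k => 1 / (qGam d γ k : ℝ) := by
  choose e he using MGam_qGam (d := d) hγ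
  have hinj : Function.Injective e := fun a b hab =>
    (qGam_strictMono hγ).injective (by rw [he a, he b, hab])
  refine summable_of_sum_range_le (c := ∏ _j : Fin (d + 2), (2 : ℝ))
    (fun k => by positivity) fun K => ?_
  obtain ⟨B, hB⟩ : ∃ B, ∀ k ∈ Finset.range K, ∀ j, e k j < B := by
    refine ⟨(∑ k ∈ Finset.range K, ∑ j, e k j) + 1, fun k hk j => Nat.lt_succ_of_le ?_⟩
    exact (Finset.single_le_sum (f := fun j => e k j) (fun _ _ => Nat.zero_le _)
      (Finset.mem_univ j)).trans (Finset.single_le_sum (f := fun k => ∑ j, e k j)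
      (fun _ _ => Nat.zero_le _) hk)
  calc ∑ k ∈ Finset.range K, 1 / (qGam d γ k : ℝ)
      = ∑ k ∈ Finset.range K, ∏ j, (1 / (γ j : ℝ)) ^ e k j := by
        refine Finset.sum_congr rfl fun k _ => ?_
        rw [he k]
        simp [Finset.prod_inv_distrib]
    _ = ∑ f ∈ (Finset.range K).image e, ∏ j, (1 / (γ j : ℝ)) ^ f j := by
        rw [Finset.sum_image fun a _ b _ h => hinj h]
    _ ≤ ∑ f ∈ Fintype.piFinset fun _ : Fin (d + 2) => Finset.range B,
          ∏ j, (1 / (γ j : ℝ)) ^ f j := by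
        refine Finset.sum_le_sum_of_subset_of_nonneg ?_ fun _ _ _ =>
          Finset.prod_nonneg fun _ _ => by positivity
        intro f hf
        obtain ⟨k, hk, rfl⟩ := Finset.mem_image.1 hf
        exact Fintype.mem_piFinset.2 fun j => Finset.mem_range.2 (hB k hk j)
    _ = ∏ j, ∑ a ∈ Finset.range B, (1 / (γ j : ℝ)) ^ a :=
        (Finset.prod_univ_sum (fun _ => Finset.range B) fun j a => (1 / (γ j : ℝ)) ^ a).symm
    _ ≤ ∏ _j : Fin (d + 2), (2 : ℝ) := by
        refine Finset.prod_le_prod (fun j _ => Finset.sum_nonneg fun _ _ => by positivity)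
          fun j _ => ?_
        have h2 : (2 : ℝ) ≤ γ j := by exact_mod_cast hγ j
        have : (1 / (γ j : ℝ)) ≤ 1 / 2 := by gcongr
        calc ∑ a ∈ Finset.range B, (1 / (γ j : ℝ)) ^ a
            ≤ ∑ a ∈ Finset.range B, (1 / 2 : ℝ) ^ a := by gcongr
          _ ≤ 2 := sum_geometric_two_le B

/-- If `u` is antitone, nonnegative and summable then `n * u n → 0`. -/
lemma tendsto_nat_mul_of_antitone {u : ℕ → ℝ} (hu : Antitone u) (h0 : ∀ n, 0 ≤ u n)
    (hs : Summable u) : Tendsto (fun n : ℕ => (n : ℝ) * u n) atTop (𝓝 0) := by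
  -- `n u_n ≤ 2 ∑_{n/2 ≤ k < n} u_k`, a difference of partial sums.
  have hp := hs.tendsto_sum_tsum_nat
  have hhalf : Tendsto (fun n : ℕ => n / 2) atTop atTop :=
    Nat.tendsto_div_const_atTop (by norm_num)
  have hlim := (hp.sub (hp.comp hhalf)).const_mul 2
  rw [sub_self, mul_zero] at hlim
  refine squeeze_zero (fun n => mul_nonneg n.cast_nonneg (h0 n)) (fun n => ?_) hlim
  simp only [Function.comp]
  rw [← Finset.sum_Ico_eq_sub _ (Nat.div_le_self n 2)]
  have h1 : ((Finset.Ico (n / 2) n).card : ℝ) * u n ≤ ∑ k ∈ Finset.Ico (n / 2) n, u k := by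
    rw [← nsmul_eq_mul]
    exact Finset.card_nsmul_le_sum _ _ _ fun k hk => hu (Finset.mem_Ico.1 hk).2.le
  have h2 : (n : ℝ) ≤ 2 * (Finset.Ico (n / 2) n).card := by
    rw [Nat.card_Ico]
    exact_mod_cast (by omega : n ≤ 2 * (n - n / 2))
  nlinarith [h0 n]

/-! ### The increments of `log |Σ_k|` -/

/-- `log |Σ|` for the cutoff `qGam d γ k - 1`, the last integer before the `k`-th element of `M_Γ`
(counting from zero). Thus `hSig 0 = 0`, and `hSig (k + 1)` is the logarithm of the cardinality of
`SigGamNC d γ N C k`. -/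
noncomputable def hSig (d : ℕ) (γ : Fin (d + 2) → ℕ) (N : ℕ) (C : Set ℕ) (k : ℕ) : ℝ :=
  Real.log (Nat.card (SigT d γ N C (qGam d γ k - 1)))

lemma hSig_zero (hγ : ∀ j, 2 ≤ γ j) (hN : 2 ≤ N) (hC : 0 ∈ C) : hSig d γ N C 0 = 0 := by
  rw [hSig, qGam_zero hγ, Nat.sub_self, SigT_zero hγ hN hC]
  simp

open Classical in
lemma log_card_SigT (hγ : ∀ j, 2 ≤ γ j) (hC : 0 ∈ C) (t : ℕ) :
    Real.log (Nat.card (SigT d γ N C t)) = hSig d γ N C (Nat.count (MGam d γ) (t + 1)) := by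
  have hq : t + 1 ≤ qGam d γ (Nat.count (MGam d γ) (t + 1)) :=
    Nat.le_nth_count (MGam_infinite hγ) (t + 1)
  rw [hSig, ← SigT_eq hC (by omega : t ≤ qGam d γ (Nat.count (MGam d γ) (t + 1)) - 1)]
  intro m hm hle
  by_contra! hlt
  have h1 : Nat.count (MGam d γ) (t + 1) ≤ Nat.count (MGam d γ) m := Nat.count_monotone _ hlt
  have h2 := (qGam_strictMono (d := d) hγ).monotone h1
  have h3 : qGam d γ (Nat.count (MGam d γ) m) = m := Nat.nth_count hm
  omega

lemma hSig_succ (hγ : ∀ j, 2 ≤ γ j) (hC : 0 ∈ C) (k : ℕ) :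
    hSig d γ N C (k + 1) = Real.log (Nat.card (SigT d γ N C (qGam d γ k))) := by
  classical
  rw [log_card_SigT hγ hC]
  congr 1
  have h := Nat.count_nth_of_infinite (MGam_infinite (d := d) hγ) k
  rw [Nat.count_succ, if_pos (MGam_qGam hγ k)]
  exact congrArg (· + 1) h.symm

lemma hSig_nonneg (k : ℕ) : 0 ≤ hSig d γ N C k := Real.log_natCast_nonneg _

lemma hSig_le_succ (hγ : ∀ j, 2 ≤ γ j) (hN : 2 ≤ N) (hC : 0 ∈ C) (k : ℕ) :
    hSig d γ N C k ≤ hSig d γ N C (k + 1) := by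
  rw [hSig_succ hγ hC, hSig]
  have := card_SigT_pos (d := d) (γ := γ) hN hC (qGam d γ k - 1)
  refine Real.log_le_log (by exact_mod_cast this) ?_
  exact_mod_cast Nat.card_mono (finite_SigT _) (SigT_mono hC (Nat.sub_le _ _))

lemma hSig_succ_le (hle : ∀ j, γ j ≤ γ (Fin.last (d + 1))) (hγ : ∀ j, 2 ≤ γ j) (hN : 2 ≤ N)
    (hC : 0 ∈ C) (k : ℕ) : hSig d γ N C (k + 1) ≤ hSig d γ N C k + Real.log N := by
  rw [hSig_succ hγ hC, hSig]
  have hpos := card_SigT_pos (d := d) (γ := γ) hN hC (qGam d γ k - 1)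
  have hpos' := card_SigT_pos (d := d) (γ := γ) hN hC (qGam d γ k)
  have h := card_SigT_succ_le (C := C) hle hγ hN (qGam d γ k - 1)
  rw [Nat.sub_add_cancel (qGam_pos hγ k)] at h
  rw [add_comm, ← Real.log_mul (by positivity) (by positivity)]
  refine Real.log_le_log (by exact_mod_cast hpos') ?_
  exact_mod_cast h

lemma hSig_le (hle : ∀ j, γ j ≤ γ (Fin.last (d + 1))) (hγ : ∀ j, 2 ≤ γ j) (hN : 2 ≤ N)
    (hC : 0 ∈ C) (k : ℕ) : hSig d γ N C k ≤ k * Real.log N := by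
  induction k with
  | zero => simp [hSig_zero hγ hN hC]
  | succ k ih =>
    have := hSig_succ_le hle hγ hN hC k
    push_cast
    linarith

/-- Summation by parts of `log |X_{Γ;n}| = ∑_{i ∈ I_Γ, i ≤ n} log |Σ(⌊n/i⌋)|`: the `k`-th increment
of `log |Σ|` is counted once for every `i ∈ I_Γ` with `i q_k ≤ n`. -/
lemma log_card_XGamNC (hle : ∀ j, γ j ≤ γ (Fin.last (d + 1))) (hγ : ∀ j, 2 ≤ γ j)
    (hcop : ∀ i j, i ≠ j → Nat.Coprime (γ i) (γ j)) (hN : 2 ≤ N) (hC : 0 ∈ C) (n : ℕ) :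
    Real.log (Nat.card (XGamNC d γ N C n)) =
      ∑' k, (hSig d γ N C (k + 1) - hSig d γ N C k) * countI d γ (n / qGam d γ k) := by
  classical
  have hsupp : ∀ k ∉ Finset.range (n + 1),
      (hSig d γ N C (k + 1) - hSig d γ N C k) * (countI d γ (n / qGam d γ k) : ℝ) = 0 := by
    intro k hk
    rw [Finset.mem_range] at hk
    have := lt_qGam (d := d) hγ k
    rw [Nat.div_eq_of_lt (by omega), Nat.le_zero.1 (countI_le 0)]
    simp
  rw [tsum_eq_sum hsupp, card_XGamNC hle hγ hcop hN, Nat.cast_prod, Real.log_prod fun i _ => by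
    exact_mod_cast (card_SigT_pos hN hC _).ne']
  have hinner : ∀ i ∈ (Finset.Icc 1 n).filter (IGam d γ),
      Real.log (Nat.card (SigT d γ N C (n / i))) = ∑ k ∈ Finset.range (n + 1),
        if i ≤ n / qGam d γ k then hSig d γ N C (k + 1) - hSig d γ N C k else 0 := by
    intro i hi
    have hi1 : 1 ≤ i := by simp at hi; omega
    have hset : (Finset.range (n + 1)).filter (fun k => i ≤ n / qGam d γ k) =
        Finset.range (Nat.count (MGam d γ) (n / i + 1)) := by
      ext k
      have h1 := Nat.lt_nth_iff_count_lt (MGam_infinite (d := d) hγ) (a := k) (b := n / i + 1)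
      have h2 : i ≤ n / qGam d γ k ↔ qGam d γ k < n / i + 1 := by
        rw [Nat.lt_succ_iff, Nat.le_div_iff_mul_le (qGam_pos hγ k), Nat.le_div_iff_mul_le hi1,
          mul_comm]
      have h3 := Nat.div_le_self n i
      have h4 := lt_qGam (d := d) hγ k
      simp only [Finset.mem_filter, Finset.mem_range]
      rw [h1, h2]
      change _ ↔ qGam d γ k < _
      omega
    rw [← Finset.sum_filter, hset, Finset.sum_range_sub (hSig d γ N C), hSig_zero hγ hN hC,
      sub_zero, log_card_SigT hγ hC]
  rw [Finset.sum_congr rfl hinner, Finset.sum_comm]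
  refine Finset.sum_congr rfl fun k _ => ?_
  rw [← Finset.sum_filter, Finset.sum_const, nsmul_eq_mul, mul_comm, countI_eq_card]
  congr 3
  ext i
  have := Nat.div_le_self n (qGam d γ k)
  simp only [Finset.mem_filter, Finset.mem_Icc]
  constructor
  · rintro ⟨⟨⟨a, b⟩, c⟩, e⟩
    exact ⟨⟨a, e⟩, c⟩
  · rintro ⟨⟨a, e⟩, c⟩
    exact ⟨⟨⟨a, by omega⟩, c⟩, e⟩

end Entropy

/-- For `1 < γ_1 < ⋯ < γ_d` pairwise coprime (`d ≥ 2`), `N ≥ 2`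
symbols and a constraint set `C ∋ 0`, the limit `lim_{n→∞} (1/n)·log|X_{Γ;n}(N,C)|`
exists and equals `∑_{k=1}^∞ β_Γ·(1/q_k − 1/q_{k+1})·log|Σ_k(N,C)|`, the series
being convergent. -/
theorem entropy_XGamNC (d : ℕ) (γ : Fin (d + 2) → ℕ)
    (h1 : 1 < γ 0) (hmono : StrictMono γ)
    (hcop : ∀ i j, i ≠ j → Nat.Coprime (γ i) (γ j))
    (N : ℕ) (hN : 2 ≤ N) (C : Set ℕ) (hC : 0 ∈ C) :
    Summable (fun k : ℕ => betaGam d γ *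
      (1 / (qGam d γ k : ℝ) - 1 / (qGam d γ (k + 1) : ℝ)) *
      Real.log (Nat.card (SigGamNC d γ N C k))) ∧
    Tendsto (fun n : ℕ => Real.log (Nat.card (XGamNC d γ N C n)) / (n : ℝ)) atTop
      (nhds (∑' k : ℕ, betaGam d γ *
        (1 / (qGam d γ k : ℝ) - 1 / (qGam d γ (k + 1) : ℝ)) *
        Real.log (Nat.card (SigGamNC d γ N C k)))) := by
  have hγ : ∀ j, 2 ≤ γ j := fun j => h1.trans_le (hmono.monotone (Fin.zero_le j))
  have hle : ∀ j, γ j ≤ γ (Fin.last (d + 1)) := fun j => hmono.monotone (Fin.le_last j)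
  have hβ := betaGam_nonneg (d := d) (γ := γ)
  have hlogN : 0 ≤ Real.log N := Real.log_natCast_nonneg N
  have hsum := summable_inv_qGam hγ
  set δ : ℕ → ℝ := fun k => hSig d γ N C (k + 1) - hSig d γ N C k with hδ
  have hδ0 : ∀ k, 0 ≤ δ k := fun k => sub_nonneg.2 (hSig_le_succ hγ hN hC k)
  have hδN : ∀ k, δ k ≤ Real.log N := fun k => by
    have := hSig_succ_le hle hγ hN hC k
    simp only [hδ]; linarith
  have hanti : Antitone fun k => 1 / (qGam d γ k : ℝ) := fun a b hab =>
    one_div_le_one_div_of_le (by exact_mod_cast qGam_pos hγ a)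
      (by exact_mod_cast (qGam_strictMono hγ).monotone hab)
  have hlim : Tendsto (fun n : ℕ => Real.log (Nat.card (XGamNC d γ N C n)) / (n : ℝ)) atTop
      (𝓝 (∑' k, δ k * (betaGam d γ * (1 / qGam d γ k)))) := by
    have heq : (fun n : ℕ => Real.log (Nat.card (XGamNC d γ N C n)) / (n : ℝ)) =
        fun n : ℕ => ∑' k, δ k * ((countI d γ (n / qGam d γ k) : ℝ) / n) := by
      funext n
      rw [log_card_XGamNC hle hγ hcop hN hC, ← tsum_div_const]
      simp only [hδ, mul_div_assoc]
    rw [heq]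
    refine tendsto_tsum_of_dominated_convergence (hsum.mul_left (Real.log N))
      (fun k => (tendsto_countI hγ (qGam_pos hγ k)).const_mul _) ?_
    filter_upwards [eventually_gt_atTop 0] with n hn k
    have hn' : (0 : ℝ) < n := by exact_mod_cast hn
    have hc : (countI d γ (n / qGam d γ k) : ℝ) / n ≤ 1 / qGam d γ k := by
      rw [div_le_iff₀ hn', one_div_mul_eq_div]
      calc (countI d γ (n / qGam d γ k) : ℝ) ≤ ((n / qGam d γ k : ℕ) : ℝ) := by
            exact_mod_cast countI_le _
        _ ≤ n / qGam d γ k := Nat.cast_div_le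
    rw [Real.norm_of_nonneg (mul_nonneg (hδ0 k) (by positivity))]
    exact mul_le_mul (hδN k) hc (by positivity) hlogN
  have hsumδ : Summable fun k => δ k * (betaGam d γ * (1 / qGam d γ k)) := by
    refine Summable.of_nonneg_of_le (fun k => mul_nonneg (hδ0 k) (by positivity)) (fun k => ?_)
      (hsum.mul_left (Real.log N * betaGam d γ))
    rw [← mul_assoc]
    gcongr
    exact hδN k
  -- Summation by parts; the boundary term `β h_K / q_K` vanishes since `h_K = O(K)`, `K = o(q_K)`.
  have hparts : ∀ K, ∑ k ∈ Finset.range K, betaGam d γ *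
      (1 / (qGam d γ k : ℝ) - 1 / (qGam d γ (k + 1) : ℝ)) *
        Real.log (Nat.card (SigGamNC d γ N C k)) =
      ∑ k ∈ Finset.range K, δ k * (betaGam d γ * (1 / qGam d γ k)) -
        betaGam d γ * (hSig d γ N C K * (1 / qGam d γ K)) := by
    intro K
    induction K with
    | zero => simp [hSig_zero hγ hN hC]
    | succ K ih =>
      have : Real.log (Nat.card (SigGamNC d γ N C K)) = hSig d γ N C (K + 1) :=
        (hSig_succ hγ hC K).symm
      rw [Finset.sum_range_succ, Finset.sum_range_succ, ih, this]
      simp only [hδ]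
      ring
  have hbdry : Tendsto (fun K => betaGam d γ * (hSig d γ N C K * (1 / qGam d γ K))) atTop
      (𝓝 0) := by
    have hz := (tendsto_nat_mul_of_antitone hanti (fun _ => by positivity) hsum).const_mul
      (betaGam d γ * Real.log N)
    rw [mul_zero] at hz
    refine squeeze_zero (fun K => mul_nonneg hβ (mul_nonneg (hSig_nonneg K) (by positivity)))
      (fun K => ?_) hz
    have := mul_le_mul_of_nonneg_right (hSig_le hle hγ hN hC K)
      (by positivity : (0 : ℝ) ≤ 1 / qGam d γ K)
    calc betaGam d γ * (hSig d γ N C K * (1 / qGam d γ K))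
        ≤ betaGam d γ * (K * Real.log N * (1 / qGam d γ K)) := by gcongr
      _ = _ := by ring
  have hhas : HasSum (fun k : ℕ => betaGam d γ *
      (1 / (qGam d γ k : ℝ) - 1 / (qGam d γ (k + 1) : ℝ)) *
        Real.log (Nat.card (SigGamNC d γ N C k)))
      (∑' k, δ k * (betaGam d γ * (1 / qGam d γ k))) := by
    rw [hasSum_iff_tendsto_nat_of_nonneg fun k => mul_nonneg
      (mul_nonneg hβ (sub_nonneg.2 (hanti k.le_succ))) (Real.log_natCast_nonneg _)]
    simp only [hparts]
    simpa using hsumδ.tendsto_sum_tsum_nat.sub hbdry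
  exact ⟨hhas.summable, hhas.tsum_eq ▸ hlim⟩
end
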